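/- Let ρ ∈ (-1,1), α₁ > 0, α₂ ∈ ℝ, and set λ₂ = (α₂ + ρα₁)/√(1+α₁²(1-ρ²)). Let γ₁ > 0 be a constant with α₁·γ₁ + α₂ > 0 and β₁ := (γ₁-ρ)/(1-ρ²) + α₁·(α₁γ₁+α₂) > 0, and let f₁, f₂ : (0,1) → ℝ satisfy f₂(u) → -∞ and f₂(u)·(f₁(u)/f₂(u) - γ₁) → 0 as u → 0⁺. Put A(u) = f₁(u) - ρ·f₂(u) and B(u) = α₁·f₁(u) + α₂·f₂(u) (so B(u) → -∞). Then, as u → 0⁺, (1/(α₁·√(1-ρ²)·Φ(λ₂·f₂(u))))·∫_{-∞}^{B(u)} (2π)^{-1/2}·e^{-(x-(α₂+ρα₁)·f₂(u))²/(2·α₁²·(1-ρ²))}·Φ(x) dx ~ e^{-A(u)²/(2(1-ρ²)) - B(u)²/2} / (2π·√(1-ρ²)·Φ(λ₂f₂(u))·|B(u)|·|f₂(u)|·β₁), where f ~ g means f/g → 1. -/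

import Mathlib

/-!
Substituting `x = B - s / |f₂|` and completing the square at the endpoint, where
`B - (α₂ + ρ α₁) f₂ = α₁ A`, the Gaussian factor times `Φ(x)` becomes
`exp (-A² / (2 (1 - ρ²)) - B² / 2) / (2π |B|)` times

  `exp (-κ s - d (s / |f₂|)²) · (|B| / (|B| + s / |f₂|)) · mills (|B| + s / |f₂|)`,

where `mills y = y Φ(-y) / φ(y)`, `d ≥ 0` is a constant and `κ = (-A / (α₁ (1 - ρ²)) - B) / |f₂|`. The hypothesis on
`f₁ / f₂` says that `f₁ - γ₁ f₂ → 0`, hence `κ → β₁ / α₁ > 0` and `|B| → ∞`. Since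
`0 ≤ mills ≤ 1` and `mills → 1` at infinity (`mills_le_one`, `tendsto_mills`), dominated convergence
with the majorant `exp (-(β₁ / (2 α₁)) s)` shows that the integral over `s > 0` tends to
`∫ exp (-(β₁ / α₁) s) = α₁ / β₁` (`tendsto_laplace`).
-/

open Real Filter Topology MeasureTheory

/-- The standard normal cumulative distribution function. -/
noncomputable def stdNormalCDF (x : ℝ) : ℝ :=
  ∫ t in Set.Iic x, (Real.sqrt (2 * Real.pi))⁻¹ * Real.exp (-(t ^ 2) / 2)

/-- Substitution `x = b - s / F`. -/
lemma setIntegral_Iic_eq_Ioi (g : ℝ → ℝ) (b : ℝ) {F : ℝ} (hF : 0 < F) :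
    ∫ x in Set.Iic b, g x = F⁻¹ * ∫ s in Set.Ioi (0 : ℝ), g (b - s / F) := by
  have h1 : ∫ x in Set.Ioi (-b), g (-x) = ∫ x in Set.Iic b, g x := by
    rw [integral_comp_neg_Ioi, neg_neg]
  have h2 : ∫ x in Set.Ioi (0 : ℝ), g (b - x) = ∫ x in Set.Ioi (-b), g (-x) := by
    have h := (measurePreserving_add_right (volume : Measure ℝ) (-b)).setIntegral_preimage_emb
      (measurableEmbedding_addRight (-b)) (fun x => g (-x)) (Set.Ioi (-b))
    rw [← h]
    simp [sub_eq_neg_add, add_comm]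
  have h3 := integral_comp_mul_left_Ioi (fun x => g (b - x)) 0 (inv_pos.2 hF)
  rw [mul_zero, inv_inv, smul_eq_mul] at h3
  rw [← h1, ← h2]
  simp only [div_eq_inv_mul]
  rw [h3, ← mul_assoc, inv_mul_cancel₀ hF.ne', one_mul]

lemma integrable_gaussian : Integrable
    (fun t : ℝ => (Real.sqrt (2 * Real.pi))⁻¹ * Real.exp (-(t ^ 2) / 2)) := by
  have h := (integrable_exp_neg_mul_sq (b := 1 / 2) (by norm_num)).const_mul
    (Real.sqrt (2 * Real.pi))⁻¹
  refine h.congr (Eventually.of_forall fun t => ?_)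
  simp only
  congr 2
  ring

lemma stdNormalCDF_mono : Monotone stdNormalCDF := fun _ _ h =>
  setIntegral_mono_set integrable_gaussian.integrableOn
    (Eventually.of_forall fun t => by positivity) (Set.Iic_subset_Iic.2 h).eventuallyLE

lemma stdNormalCDF_pos (x : ℝ) : 0 < stdNormalCDF x := by
  rw [stdNormalCDF, setIntegral_pos_iff_support_of_nonneg_ae
    (Eventually.of_forall fun t => by positivity) integrable_gaussian.integrableOn]
  have : Function.support (fun t : ℝ => (Real.sqrt (2 * Real.pi))⁻¹ * Real.exp (-(t ^ 2) / 2))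
      = Set.univ := by
    ext t
    simp only [Function.mem_support, Set.mem_univ, iff_true]
    positivity
  rw [this, Set.univ_inter]
  simp

/-- The normalised Mills ratio `y Φ(-y) / φ(y)`. -/
noncomputable def mills (y : ℝ) : ℝ :=
  y * (Real.sqrt (2 * Real.pi) * Real.exp (y ^ 2 / 2)) * stdNormalCDF (-y)

lemma measurable_mills : Measurable mills := by
  have := stdNormalCDF_mono.measurable
  unfold mills
  fun_prop

lemma mills_nonneg {y : ℝ} (hy : 0 < y) : 0 ≤ mills y :=
  mul_nonneg (by positivity) (stdNormalCDF_pos _).le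

/-- Integral form of `mills`, on which the bound and the limit can be read off. -/
lemma mills_eq {y : ℝ} (hy : 0 < y) :
    mills y = ∫ s in Set.Ioi (0 : ℝ), Real.exp (-s - (s / y) ^ 2 / 2) := by
  rw [mills, stdNormalCDF, setIntegral_Iic_eq_Ioi _ _ hy, ← mul_assoc, ← integral_const_mul]
  congr 1
  ext s
  have h : Real.exp (-s - (s / y) ^ 2 / 2)
      = Real.exp (y ^ 2 / 2) * Real.exp (-((-y - s / y) ^ 2) / 2) := by
    rw [← Real.exp_add]
    congr 1
    field_simp
    ring
  have h2 : Real.sqrt (2 * Real.pi) ≠ 0 := by positivity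
  rw [h]
  field_simp

lemma mills_le_one {y : ℝ} (hy : 0 < y) : mills y ≤ 1 := by
  rw [mills_eq hy, ← integral_exp_neg_Ioi_zero]
  refine integral_mono_of_nonneg (Eventually.of_forall fun s => (Real.exp_pos _).le)
    (integrableOn_exp_neg_Ioi 0) (Eventually.of_forall fun s => Real.exp_le_exp.2 ?_)
  have := sq_nonneg (s / y)
  linarith

lemma tendsto_mills : Tendsto mills atTop (𝓝 1) := by
  have h : Tendsto (fun y : ℝ => ∫ s in Set.Ioi (0 : ℝ), Real.exp (-s - (s / y) ^ 2 / 2)) atTop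
      (𝓝 (∫ s in Set.Ioi (0 : ℝ), Real.exp (-s))) := by
    refine tendsto_integral_filter_of_dominated_convergence (fun s => Real.exp (-s))
      (Eventually.of_forall fun y => ?_) (Eventually.of_forall fun y => ?_)
      (integrableOn_exp_neg_Ioi 0) (Eventually.of_forall fun s => ?_)
    · exact (by fun_prop : Continuous fun s : ℝ =>
        Real.exp (-s - (s / y) ^ 2 / 2)).aestronglyMeasurable
    · refine Eventually.of_forall fun s => ?_
      rw [Real.norm_eq_abs, abs_of_pos (Real.exp_pos _), Real.exp_le_exp]
      have := sq_nonneg (s / y)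
      linarith
    · have h0 : Tendsto (fun y : ℝ => s / y) atTop (𝓝 0) := tendsto_const_nhds.div_atTop tendsto_id
      have h1 : Tendsto (fun y : ℝ => -s - (s / y) ^ 2 / 2) atTop (𝓝 (-s - 0 ^ 2 / 2)) :=
        ((h0.pow 2).div_const 2).const_sub _
      simpa [Function.comp_def] using (Real.continuous_exp.tendsto _).comp h1
  rw [integral_exp_neg_Ioi_zero] at h
  refine h.congr' ?_
  filter_upwards [eventually_gt_atTop 0] with y hy using (mills_eq hy).symm

/-- The Laplace-type limit: on the scale `1 / F` the integrand is `exp (-κ₀ s)` in the limit. -/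
lemma tendsto_laplace {l : Filter ℝ} [l.IsCountablyGenerated] {F b κ : ℝ → ℝ} {κ₀ d : ℝ}
    (hd : 0 ≤ d) (hκ₀ : 0 < κ₀) (hF : Tendsto F l atTop) (hb : Tendsto b l atTop)
    (hκ : Tendsto κ l (𝓝 κ₀)) :
    Tendsto (fun u => ∫ s in Set.Ioi (0 : ℝ), Real.exp (-(κ u * s) - d * (s / F u) ^ 2) *
      (b u / (b u + s / F u)) * mills (b u + s / F u)) l (𝓝 κ₀⁻¹) := by
  have hlim : ∫ s in Set.Ioi (0 : ℝ), Real.exp (-(κ₀ * s)) = κ₀⁻¹ := by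
    have := integral_exp_mul_Ioi (a := -κ₀) (by linarith) 0
    simpa [neg_mul] using this
  rw [← hlim]
  refine tendsto_integral_filter_of_dominated_convergence
    (fun s => Real.exp (-(κ₀ / 2) * s)) (Eventually.of_forall fun u => ?_) ?_
    (integrableOn_exp_mul_Ioi (by linarith) 0) ?_
  · have := measurable_mills
    exact (by fun_prop : Measurable fun s : ℝ => Real.exp (-(κ u * s) - d * (s / F u) ^ 2) *
      (b u / (b u + s / F u)) * mills (b u + s / F u)).aestronglyMeasurable
  · filter_upwards [hF.eventually_gt_atTop 0, hb.eventually_gt_atTop 0,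
      hκ.eventually_const_lt (half_lt_self hκ₀)] with u hFu hbu hκu
    refine (ae_restrict_iff' measurableSet_Ioi).2 (Eventually.of_forall fun s hs => ?_)
    have hs : 0 < s := hs
    have hy : 0 < b u + s / F u := by positivity
    have hm := mills_nonneg hy
    rw [Real.norm_eq_abs, abs_of_nonneg (by positivity)]
    have h1 : Real.exp (-(κ u * s) - d * (s / F u) ^ 2) ≤ Real.exp (-(κ₀ / 2) * s) := by
      refine Real.exp_le_exp.2 ?_
      have h2 : 0 ≤ d * (s / F u) ^ 2 := by positivity
      nlinarith
    have h2 : b u / (b u + s / F u) ≤ 1 := (div_le_one hy).2 (by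
      have : 0 < s / F u := by positivity
      linarith)
    calc _ ≤ Real.exp (-(κ₀ / 2) * s) * 1 * 1 := by
          gcongr
          exact mills_le_one hy
      _ = _ := by ring
  · refine Eventually.of_forall fun s => ?_
    have h0 : Tendsto (fun u => s / F u) l (𝓝 0) := tendsto_const_nhds.div_atTop hF
    have hsum : Tendsto (fun u => b u + s / F u) l atTop := hb.atTop_add h0
    have h1 : Tendsto (fun u => Real.exp (-(κ u * s) - d * (s / F u) ^ 2)) l
        (𝓝 (Real.exp (-(κ₀ * s) - d * 0 ^ 2))) :=
      (Real.continuous_exp.tendsto _).comp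
        ((hκ.mul_const s).neg.sub ((h0.pow 2).const_mul d))
    have h2 : Tendsto (fun u => b u / (b u + s / F u)) l (𝓝 1) := by
      have h3 : Tendsto (fun u => 1 - s / F u / (b u + s / F u)) l (𝓝 (1 - 0)) :=
        (h0.div_atTop hsum).const_sub 1
      rw [sub_zero] at h3
      refine h3.congr' ?_
      filter_upwards [hsum.eventually_gt_atTop 0] with u hu
      rw [eq_div_iff hu.ne', sub_mul, div_mul_cancel₀ _ hu.ne']
      ring
    simpa using (h1.mul h2).mul (tendsto_mills.comp hsum)

/-- Corollary 4 of the paper: asymptotic behaviour of the Route 2 integral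
when `α₁ > 0` and `B(u) → -∞`. -/
theorem route_two_integral_asymptotics (ρ α₁ α₂ γ₁ : ℝ)
    (hρ : ρ ∈ Set.Ioo (-1 : ℝ) 1) (hα₁ : 0 < α₁) (hγ₁ : 0 < γ₁)
    (l₂ β₁ : ℝ)
    (hl₂ : l₂ = (α₂ + ρ * α₁) / Real.sqrt (1 + α₁ ^ 2 * (1 - ρ ^ 2)))
    (hαγ : 0 < α₁ * γ₁ + α₂)
    (hβ₁ : β₁ = (γ₁ - ρ) / (1 - ρ ^ 2) + α₁ * (α₁ * γ₁ + α₂))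
    (hβ₁pos : 0 < β₁)
    (f₁ f₂ : ℝ → ℝ)
    (hf₂ : Tendsto f₂ (𝓝[>] (0 : ℝ)) atBot)
    (hratio : Tendsto (fun u => f₂ u * (f₁ u / f₂ u - γ₁)) (𝓝[>] (0 : ℝ)) (𝓝 0))
    (A B : ℝ → ℝ)
    (hA : A = fun u => f₁ u - ρ * f₂ u)
    (hB : B = fun u => α₁ * f₁ u + α₂ * f₂ u) :
    Tendsto (fun u =>
      ((1 / (α₁ * Real.sqrt (1 - ρ ^ 2) * stdNormalCDF (l₂ * f₂ u))) *
        ∫ x in Set.Iic (B u),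
          (Real.sqrt (2 * Real.pi))⁻¹ *
            Real.exp (-(x - (α₂ + ρ * α₁) * f₂ u) ^ 2 /
              (2 * α₁ ^ 2 * (1 - ρ ^ 2))) * stdNormalCDF x) /
      (Real.exp (-(A u) ^ 2 / (2 * (1 - ρ ^ 2)) - (B u) ^ 2 / 2) /
        (2 * Real.pi * Real.sqrt (1 - ρ ^ 2) * stdNormalCDF (l₂ * f₂ u) *
          |B u| * |f₂ u| * β₁)))
      (𝓝[>] (0 : ℝ)) (𝓝 1) := by
  have hr : 0 < 1 - ρ ^ 2 := by nlinarith [hρ.1, hρ.2]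
  have hF : Tendsto (fun u => -f₂ u) (𝓝[>] (0 : ℝ)) atTop := tendsto_neg_atBot_atTop.comp hf₂
  have hne : ∀ᶠ u in 𝓝[>] (0 : ℝ), f₂ u < 0 := hf₂.eventually_lt_atBot 0
  have he : Tendsto (fun u => f₁ u - γ₁ * f₂ u) (𝓝[>] (0 : ℝ)) (𝓝 0) := by
    refine hratio.congr' ?_
    filter_upwards [hne] with u hu
    have := hu.ne
    field_simp
  have hb : Tendsto (fun u => -B u) (𝓝[>] (0 : ℝ)) atTop := by
    have h := (hF.const_mul_atTop hαγ).atTop_add (he.const_mul (-α₁))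
    refine h.congr fun u => ?_
    rw [hB]
    ring
  have hκ : Tendsto (fun u => (-A u / (α₁ * (1 - ρ ^ 2)) - B u) / (-f₂ u)) (𝓝[>] (0 : ℝ))
      (𝓝 (β₁ / α₁)) := by
    have h := (((he.const_mul (1 / (α₁ * (1 - ρ ^ 2)) + α₁)).div_atTop hF).const_sub (β₁ / α₁))
    rw [sub_zero] at h
    refine h.congr' ?_
    filter_upwards [hne] with u hu
    have := hu.ne
    have := hr.ne'
    simp only [hA, hB, hβ₁]
    field_simp
    ring
  have key := (tendsto_laplace (d := 1 / (2 * α₁ ^ 2 * (1 - ρ ^ 2)) + 1 / 2) (by positivity)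
    (by positivity) hF hb hκ).const_mul (β₁ / α₁)
  rw [mul_inv_cancel₀ (by positivity)] at key
  refine key.congr' ?_
  filter_upwards [hne, hb.eventually_gt_atTop 0] with u hu hbu
  have hFu : 0 < -f₂ u := by linarith
  have hΦ := stdNormalCDF_pos (l₂ * f₂ u)
  have hBA : B u - (α₂ + ρ * α₁) * f₂ u = α₁ * A u := by
    rw [hA, hB]
    ring
  -- From here on, both sides of the goal are compared exactly, at a fixed small `u`.
  rw [setIntegral_Iic_eq_Ioi _ _ hFu, abs_of_neg hu, abs_of_neg (by linarith : B u < 0)]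
  set E := Real.exp (-(A u) ^ 2 / (2 * (1 - ρ ^ 2)) - (B u) ^ 2 / 2) with hE
  have hEpos : 0 < E := Real.exp_pos _
  have hpt : ∀ s ∈ Set.Ioi (0 : ℝ),
      (Real.sqrt (2 * Real.pi))⁻¹ *
            Real.exp (-(B u - s / -f₂ u - (α₂ + ρ * α₁) * f₂ u) ^ 2 /
              (2 * α₁ ^ 2 * (1 - ρ ^ 2))) * stdNormalCDF (B u - s / -f₂ u)
      = (E / (2 * Real.pi * -B u)) *
        (Real.exp (-((-A u / (α₁ * (1 - ρ ^ 2)) - B u) / (-f₂ u) * s)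
          - (1 / (2 * α₁ ^ 2 * (1 - ρ ^ 2)) + 1 / 2) * (s / -f₂ u) ^ 2) *
      (-B u / (-B u + s / -f₂ u)) * mills (-B u + s / -f₂ u)) := by
    intro s hs
    have hs : 0 < s := hs
    have ht : 0 < s / -f₂ u := by positivity
    -- Everything depends on `s` only through `t = s / |f₂ u|`, the distance to the endpoint.
    have hmul : (-A u / (α₁ * (1 - ρ ^ 2)) - B u) / (-f₂ u) * s
        = (-A u / (α₁ * (1 - ρ ^ 2)) - B u) * (s / -f₂ u) := by ring
    rw [hmul]
    generalize s / -f₂ u = t at ht ⊢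
    have hy : 0 < -B u + t := by linarith
    have hx : -(-B u + t) = B u - t := by ring
    have hexp : E * Real.exp (-((-A u / (α₁ * (1 - ρ ^ 2)) - B u) * t)
          - (1 / (2 * α₁ ^ 2 * (1 - ρ ^ 2)) + 1 / 2) * t ^ 2) * Real.exp ((-B u + t) ^ 2 / 2)
        = Real.exp (-(B u - t - (α₂ + ρ * α₁) * f₂ u) ^ 2 / (2 * α₁ ^ 2 * (1 - ρ ^ 2))) := by
      have : B u - t - (α₂ + ρ * α₁) * f₂ u = α₁ * A u - t := by linarith
      rw [this, hE, ← Real.exp_add, ← Real.exp_add]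
      congr 1
      have := hr.ne'
      field_simp
      ring
    have hsq : (Real.sqrt (2 * Real.pi)) ^ 2 = 2 * Real.pi := Real.sq_sqrt (by positivity)
    have hsq0 : 0 < Real.sqrt (2 * Real.pi) := by positivity
    rw [mills, hx, ← hexp]
    generalize Real.sqrt (2 * Real.pi) = q at hsq hsq0 ⊢
    rw [← hsq]
    have := hbu.ne'
    have := hy.ne'
    generalize -B u = b at *
    field_simp
  rw [setIntegral_congr_fun measurableSet_Ioi hpt, integral_const_mul]
  have hsr : 0 < Real.sqrt (1 - ρ ^ 2) := Real.sqrt_pos.2 hr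
  generalize (∫ s in Set.Ioi (0 : ℝ), _ : ℝ) = I
  generalize Real.sqrt (1 - ρ ^ 2) = q at *
  generalize stdNormalCDF (l₂ * f₂ u) = p at *
  generalize -B u = b at *
  generalize -f₂ u = f at *
  have := Real.pi_pos
  field_simp
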